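/- ∑_{n=0}^∞ 1/(n!)^2 = (1/(2π)) ∫_0^{2π} e^{2 cos t} dt. -/

import Mathlib

/-!
Since `2 cos t = e^{it} + e^{-it}`, the integrand is `exp (e^{it}) * exp (e^{-it})`, which expands as
the double series `∑ e^{i(m-n)t} / (m! n!)` over `ℕ × ℕ`, dominated by the summable constants
`1 / (m! n!)`. Integrating termwise over `[0, 2π]`, orthogonality of the characters
(`integral_cexp_sub`) leaves only the diagonal `m = n`, where each term contributes `2π / (n!)²`.
-/

open Nat Real intervalIntegral

lemma integral_cexp_sub (m n : ℕ) :
    ∫ t in (0:ℝ)..(2 * π), Complex.exp (((m : ℂ) - n) * Complex.I * t) =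
      if m = n then (2 * π : ℂ) else 0 := by
  split_ifs with h
  · simp [h]
  · have hc : ((m : ℂ) - n) * Complex.I ≠ 0 :=
      mul_ne_zero (sub_ne_zero.mpr (by exact_mod_cast h)) Complex.I_ne_zero
    rw [integral_exp_mul_complex hc]
    have h1 : Complex.exp (((m : ℂ) - n) * Complex.I * ((2 * π : ℝ) : ℂ)) = 1 := by
      rw [Complex.exp_eq_one_iff]
      exact ⟨(m : ℤ) - n, by push_cast; ring⟩
    rw [h1]
    simp

lemma summable_inv_factorial_mul :
    Summable fun p : ℕ × ℕ => (1 / (p.1 ! : ℝ)) * (1 / (p.2 ! : ℝ)) := by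
  have h : Summable fun n : ℕ => 1 / (n ! : ℝ) := by
    simpa using Real.summable_pow_div_factorial 1
  exact h.mul_of_nonneg h (fun n => by positivity) (fun n => by positivity)

lemma norm_cexp_term (t : ℝ) (p : ℕ × ℕ) :
    ‖(1 / ((p.1 ! : ℂ) * p.2 !)) * Complex.exp (((p.1 : ℂ) - p.2) * Complex.I * t)‖ =
      (1 / (p.1 ! : ℝ)) * (1 / (p.2 ! : ℝ)) := by
  have h : ((p.1 : ℂ) - p.2) * Complex.I * t = (((p.1 : ℝ) - p.2) * t : ℝ) * Complex.I := by
    push_cast; ring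
  rw [norm_mul, h, Complex.norm_exp_ofReal_mul_I]
  simp [mul_comm]

lemma hasSum_cexp (z : ℂ) : HasSum (fun n : ℕ => z ^ n / (n ! : ℂ)) (Complex.exp z) := by
  rw [Complex.exp_eq_exp_ℂ]
  exact NormedSpace.expSeries_div_hasSum_exp z

lemma cexp_term_eq_mul (t : ℝ) (p : ℕ × ℕ) :
    (1 / ((p.1 ! : ℂ) * p.2 !)) * Complex.exp (((p.1 : ℂ) - p.2) * Complex.I * t) =
      (Complex.exp (t * Complex.I) ^ p.1 / (p.1 ! : ℂ)) *
        (Complex.exp (-t * Complex.I) ^ p.2 / (p.2 ! : ℂ)) := by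
  rw [← Complex.exp_nat_mul, ← Complex.exp_nat_mul, _root_.div_mul_div_comm,
    ← Complex.exp_add, _root_.div_mul_eq_mul_div, one_mul]
  congr 2
  ring

lemma ofReal_exp_two_cos (t : ℝ) : ((Real.exp (2 * Real.cos t) : ℝ) : ℂ) =
    Complex.exp (Complex.exp (t * Complex.I)) * Complex.exp (Complex.exp (-t * Complex.I)) := by
  rw [← Complex.exp_add, ← Complex.two_cos, Complex.ofReal_exp, Complex.ofReal_mul,
    Complex.ofReal_cos, Complex.ofReal_ofNat]

/-- The product of the exponential series of `e^{it}` and `e^{-it}`, as an unconditional double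
series. -/
lemma hasSum_cexp_two_cos (t : ℝ) :
    HasSum (fun p : ℕ × ℕ => (1 / ((p.1 ! : ℂ) * p.2 !)) *
      Complex.exp (((p.1 : ℂ) - p.2) * Complex.I * t)) ((Real.exp (2 * Real.cos t) : ℝ) : ℂ) := by
  have hsum : Summable fun p : ℕ × ℕ => (1 / ((p.1 ! : ℂ) * p.2 !)) *
      Complex.exp (((p.1 : ℂ) - p.2) * Complex.I * t) :=
    Summable.of_norm (by simpa only [norm_cexp_term] using summable_inv_factorial_mul)
  rw [funext (cexp_term_eq_mul t)] at hsum ⊢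
  rw [ofReal_exp_two_cos]
  have h1 := hasSum_cexp (Complex.exp (t * Complex.I))
  have h2 := hasSum_cexp (Complex.exp (-t * Complex.I))
  have h3 := h1.mul h2 hsum
  exact h3

/-- `∑ 1/(n!)² = (1/(2π)) ∫₀^{2π} e^{2 cos t} dt`. -/
theorem sum_inv_factorial_sq_integral :
    (∑' n : ℕ, 1 / (n ! : ℝ) ^ 2) =
      (1 / (2 * Real.pi)) * ∫ t in (0:ℝ)..(2 * Real.pi), Real.exp (2 * Real.cos t) := by
  have key := intervalIntegral.hasSum_integral_of_dominated_convergence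
    (μ := MeasureTheory.volume) (a := 0) (b := 2 * π)
    (F := fun (p : ℕ × ℕ) (t : ℝ) => (1 / ((p.1 ! : ℂ) * p.2 !)) *
      Complex.exp (((p.1 : ℂ) - p.2) * Complex.I * t))
    (f := fun t => ((Real.exp (2 * Real.cos t) : ℝ) : ℂ))
    (fun p _ => (1 / (p.1 ! : ℝ)) * (1 / (p.2 ! : ℝ)))
    (fun p => (by fun_prop : Continuous _).aestronglyMeasurable)
    (fun p => .of_forall fun t _ => (norm_cexp_term t p).le)
    (.of_forall fun t _ => summable_inv_factorial_mul)
    intervalIntegrable_const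
    (.of_forall fun t _ => hasSum_cexp_two_cos t)
  simp only [intervalIntegral.integral_const_mul, integral_cexp_sub,
    intervalIntegral.integral_ofReal] at key
  have hinj : Function.Injective fun n : ℕ => (n, n) := fun a b h => congrArg Prod.fst h
  rw [← hinj.hasSum_iff] at key
  · have hdiag : HasSum (fun n : ℕ => 1 / (n ! : ℝ) ^ 2 * (2 * π))
        (∫ t in (0:ℝ)..(2 * π), Real.exp (2 * Real.cos t)) := by
      rw [← Complex.hasSum_ofReal]
      refine key.congr_fun ?_
      intro n
      simp [sq]
    have hπ : 2 * π ≠ 0 := by positivity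
    rw [← hdiag.tsum_eq, tsum_mul_right]
    field_simp
  · rintro ⟨m, n⟩ hmn
    have hne : m ≠ n := by
      rintro rfl
      exact hmn ⟨m, rfl⟩
    simp [hne]
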